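/- arXiv:2101.05835 — 2 statements merged into one kernel-verified Lean document; each statement's English description precedes it below -/
import Mathlib

section
/- Let 0 < R' < R and 0 < κ_p < κ_s. For n ∈ ℕ define z_n^{(1)}(t) = t·(h^{(1)}_n)'(t)/h^{(1)}_n(t), z_n^p = h^{(1)}_n(κ_p R)/h^{(1)}_n(κ_p R'), z_n^s = h^{(1)}_n(κ_s R)/h^{(1)}_n(κ_s R'), Λ_n(R') = z_n^{(1)}(κ_p R')·(1 + z_n^{(1)}(κ_s R')) − n(n+1), and the complex numbers Q_{n,11} = (R'/(R·Λ_n(R')))·[−n(n+1)·z_n^p + z_n^{(1)}(κ_p R')·(1 + z_n^{(1)}(κ_s R))·z_n^s], Q_{n,13} = (R'/(R·Λ_n(R')))·√(n(n+1))·[(1 + z_n^{(1)}(κ_s R'))·z_n^p − (1 + z_n^{(1)}(κ_s R))·z_n^s], Q_{n,31} = (R'/(R·Λ_n(R')))·√(n(n+1))·[−z_n^{(1)}(κ_p R)·z_n^p + z_n^{(1)}(κ_p R')·z_n^s], Q_{n,33} = (R'/(R·Λ_n(R')))·[(1 + z_n^{(1)}(κ_s R'))·z_n^{(1)}(κ_p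 R)·z_n^p − n(n+1)·z_n^s], and Q_{n,22} = z_n^s. Then there exist a constant C > 0 and an integer N such that for all n ≥ N and all (i, j) ∈ {(1,1), (1,3), (3,1), (3,3), (2,2)}, |Q_{n,ij}| ≤ C·n·(R'/R)^n. -/
/-- Spherical Bessel function of the first kind `j_n`, defined by the standard
recurrence `j_{n+1}(z) = ((2n+1)/z) j_n(z) - j_{n-1}(z)`. -/
noncomputable def jsph : ℕ → ℝ → ℝ
  | 0, z => Real.sin z / z
  | 1, z => Real.sin z / z ^ 2 - Real.cos z / z
  | (n + 2), z => ((2 * (n : ℝ) + 3) / z) * jsph (n + 1) z - jsph n z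

/-- Spherical Bessel function of the second kind `y_n`, defined by the standard
recurrence `y_{n+1}(z) = ((2n+1)/z) y_n(z) - y_{n-1}(z)`. -/
noncomputable def ysph : ℕ → ℝ → ℝ
  | 0, z => -Real.cos z / z
  | 1, z => -Real.cos z / z ^ 2 - Real.sin z / z
  | (n + 2), z => ((2 * (n : ℝ) + 3) / z) * ysph (n + 1) z - ysph n z

/-- Spherical Hankel function of the first kind `h^{(1)}_n`. -/
noncomputable def h1sph (n : ℕ) (z : ℝ) : ℂ :=
  (jsph n z : ℂ) + Complex.I * (ysph n z : ℂ)

/-- Spherical Hankel function of the second kind `h^{(2)}_n`. -/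
noncomputable def h2sph (n : ℕ) (z : ℝ) : ℂ :=
  (jsph n z : ℂ) - Complex.I * (ysph n z : ℂ)

/-- `z_n^{(1)}(t) = t (h^{(1)}_n)'(t) / h^{(1)}_n(t)`. -/
noncomputable def zn1 (n : ℕ) (t : ℝ) : ℂ := (t : ℂ) * deriv (h1sph n) t / h1sph n t

/-- `z_n^p = h^{(1)}_n(κ_p R)/h^{(1)}_n(κ_p R')`. -/
noncomputable def znp (R' R κp : ℝ) (n : ℕ) : ℂ := h1sph n (κp * R) / h1sph n (κp * R')

noncomputable def zns (R' R κs : ℝ) (n : ℕ) : ℂ := h1sph n (κs * R) / h1sph n (κs * R')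

noncomputable def LambdaN (R' κp κs : ℝ) (n : ℕ) : ℂ :=
  zn1 n (κp * R') * (1 + zn1 n (κs * R')) - (n : ℂ) * ((n : ℂ) + 1)

noncomputable def Qn11 (R' R κp κs : ℝ) (n : ℕ) : ℂ :=
  ((R' : ℂ) / ((R : ℂ) * LambdaN R' κp κs n)) *
    (-((n : ℂ) * ((n : ℂ) + 1)) * znp R' R κp n
      + zn1 n (κp * R') * (1 + zn1 n (κs * R)) * zns R' R κs n)

noncomputable def Qn13 (R' R κp κs : ℝ) (n : ℕ) : ℂ :=
  ((R' : ℂ) / ((R : ℂ) * LambdaN R' κp κs n)) * (Real.sqrt (n * (n + 1)) : ℂ) *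
    ((1 + zn1 n (κs * R')) * znp R' R κp n - (1 + zn1 n (κs * R)) * zns R' R κs n)

noncomputable def Qn31 (R' R κp κs : ℝ) (n : ℕ) : ℂ :=
  ((R' : ℂ) / ((R : ℂ) * LambdaN R' κp κs n)) * (Real.sqrt (n * (n + 1)) : ℂ) *
    (-(zn1 n (κp * R)) * znp R' R κp n + zn1 n (κp * R') * zns R' R κs n)

noncomputable def Qn33 (R' R κp κs : ℝ) (n : ℕ) : ℂ :=
  ((R' : ℂ) / ((R : ℂ) * LambdaN R' κp κs n)) *
    ((1 + zn1 n (κs * R')) * zn1 n (κp * R) * znp R' R κp n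
      - ((n : ℂ) * ((n : ℂ) + 1)) * zns R' R κs n)

noncomputable def Qn22 (R' R κs : ℝ) (n : ℕ) : ℂ := zns R' R κs n

open Filter Topology Asymptotics

/-- normalised Hankel function: `t^(n+1) h_n(t) / (2n-1)!!`. -/
noncomputable def Gn : ℕ → ℝ → ℂ
  | 0, t => -Complex.I * Complex.exp (Complex.I * t)
  | 1, t => -Complex.I * Complex.exp (Complex.I * t) * (1 - Complex.I * t)
  | (n + 2), t => Gn (n + 1) t - (t : ℂ) ^ 2 / ((2 * (n : ℂ) + 3) * (2 * (n : ℂ) + 1)) * Gn n t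

/-- odd double factorials. -/
noncomputable def dfac : ℕ → ℝ
  | 0 => 1
  | (n + 1) => (2 * (n : ℝ) + 1) * dfac n

lemma dfac_pos (n : ℕ) : 0 < dfac n := by
  induction n with
  | zero => simp [dfac]
  | succ n ih => simp only [dfac]; positivity

lemma h1sph_rec (n : ℕ) (t : ℝ) :
    h1sph (n + 2) t = ((2 * (n : ℂ) + 3) / t) * h1sph (n + 1) t - h1sph n t := by
  simp only [h1sph, jsph, ysph]
  push_cast
  ring

lemma h1sph_eq (n : ℕ) (t : ℝ) (ht : t ≠ 0) :
    h1sph n t = (dfac n : ℂ) * Gn n t / (t : ℂ) ^ (n + 1) := by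
  have htc : (t : ℂ) ≠ 0 := by exact_mod_cast ht
  have he : Complex.exp (Complex.I * t) = Complex.cos t + Complex.sin t * Complex.I := by
    rw [mul_comm, Complex.exp_mul_I]
  have key : h1sph n t = (dfac n : ℂ) * Gn n t / (t : ℂ) ^ (n + 1) ∧
      h1sph (n + 1) t = (dfac (n + 1) : ℂ) * Gn (n + 1) t / (t : ℂ) ^ (n + 2) := by
    induction n with
    | zero =>
      constructor
      · simp only [h1sph, jsph, ysph, dfac, Gn, he]
        push_cast
        field_simp
        ring_nf
        simp only [Complex.I_sq]
        ring
      · simp only [h1sph, jsph, ysph, dfac, Gn, he]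
        push_cast
        field_simp
        ring_nf
        simp only [Complex.I_sq, Complex.I_pow_three]
        ring
    | succ n ih =>
      refine ⟨ih.2, ?_⟩
      have h3 : (2 * (n : ℂ) + 3) ≠ 0 := by
        have : (2 * (n : ℝ) + 3) ≠ 0 := by positivity
        exact_mod_cast this
      have h1 : (2 * (n : ℂ) + 1) ≠ 0 := by
        have : (2 * (n : ℝ) + 1) ≠ 0 := by positivity
        exact_mod_cast this
      rw [h1sph_rec, ih.1, ih.2]
      simp only [Gn, dfac]
      push_cast
      field_simp
      ring
  exact key.1

lemma Gn_zero (n : ℕ) : Gn n 0 = -Complex.I := by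
  have key : Gn n 0 = -Complex.I ∧ Gn (n + 1) 0 = -Complex.I := by
    induction n with
    | zero => simp [Gn]
    | succ n ih => refine ⟨ih.2, ?_⟩; simp [Gn, ih.2]
  exact key.1

lemma Gn0_deriv (t : ℝ) : HasDerivAt (Gn 0) (Complex.I * Gn 0 t) t := by
  have h : HasDerivAt (fun t : ℝ => Complex.I * (t : ℂ)) Complex.I t := by
    simpa using ((hasDerivAt_id t).ofReal_comp).const_mul Complex.I
  have := (h.cexp).const_mul (-Complex.I)
  have e : Gn 0 = fun t : ℝ => -Complex.I * Complex.exp (Complex.I * t) := by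
    funext t; simp [Gn]
  rw [e]
  refine this.congr_deriv ?_
  ring

lemma Gn_deriv (n : ℕ) (t : ℝ) :
    HasDerivAt (Gn (n + 1)) ((t : ℂ) / (2 * (n : ℂ) + 1) * Gn n t) t := by
  have hid : HasDerivAt (fun t : ℝ => (t : ℂ)) 1 t := by
    simpa using (hasDerivAt_id t).ofReal_comp
  have step : ∀ (n : ℕ) (a b : ℂ), HasDerivAt (Gn n) a t → HasDerivAt (Gn (n + 1)) b t →
      HasDerivAt (Gn (n + 2)) (b - ((2 * t) / ((2 * (n : ℂ) + 3) * (2 * (n : ℂ) + 1)) * Gn n t +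
        (t : ℂ) ^ 2 / ((2 * (n : ℂ) + 3) * (2 * (n : ℂ) + 1)) * a)) t := by
    intro n a b ha hb
    have e : Gn (n + 2) = fun t : ℝ => Gn (n + 1) t -
        (t : ℂ) ^ 2 / ((2 * (n : ℂ) + 3) * (2 * (n : ℂ) + 1)) * Gn n t := by
      funext t; simp [Gn]
    rw [e]
    have h2 : HasDerivAt (fun t : ℝ => (t : ℂ) ^ 2) (2 * t) t := by
      have := hid.pow 2
      simp only [Nat.cast_ofNat, mul_one, pow_one, Nat.add_one_sub_one] at this
      exact this
    exact hb.sub ((h2.div_const _).mul ha)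
  have key : HasDerivAt (Gn (n + 1)) ((t : ℂ) / (2 * (n : ℂ) + 1) * Gn n t) t ∧
      HasDerivAt (Gn (n + 2)) ((t : ℂ) / (2 * (n : ℂ) + 3) * Gn (n + 1) t) t := by
    induction n with
    | zero =>
      have h1 : HasDerivAt (Gn 1) ((t : ℂ) / (2 * ((0 : ℕ) : ℂ) + 1) * Gn 0 t) t := by
        have e : Gn 1 = fun t : ℝ => Gn 0 t * (1 - Complex.I * t) := by
          funext t; simp [Gn]
        rw [e]
        refine ((Gn0_deriv t).mul ((hid.const_mul Complex.I).const_sub 1)).congr_deriv ?_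
        push_cast
        ring_nf
        simp only [Complex.I_sq]
        ring
      refine ⟨h1, ?_⟩
      convert step 0 _ _ (Gn0_deriv t) h1 using 1
      simp only [Gn]
      push_cast
      ring
    | succ n ih =>
      have h3 : (2 * (n : ℂ) + 3) ≠ 0 := by
        have : (2 * (n : ℝ) + 3) ≠ 0 := by positivity
        exact_mod_cast this
      have h1 : (2 * (n : ℂ) + 1) ≠ 0 := by
        have : (2 * (n : ℝ) + 1) ≠ 0 := by positivity
        exact_mod_cast this
      have h5 : (2 * (n : ℂ) + 5) ≠ 0 := by
        have : (2 * (n : ℝ) + 5) ≠ 0 := by positivity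
        exact_mod_cast this
      have e3 : (2 * ((n : ℂ) + 1) + 1) = 2 * (n : ℂ) + 3 := by ring
      have e5 : (2 * ((n : ℂ) + 1) + 3) = 2 * (n : ℂ) + 5 := by ring
      constructor
      · convert ih.2 using 1
        push_cast
        rw [e3]
      · convert step (n + 1) _ _ ih.1 ih.2 using 1
        push_cast
        rw [e3, e5]
        simp only [Gn]
        field_simp
        ring
  exact key.1

lemma Gn_bound (n : ℕ) : ∀ t : ℝ, 0 ≤ t → ‖Gn n t‖ ≤ Real.exp (t ^ 2 / 2) := by
  induction n with
  | zero =>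
    intro t ht
    have : ‖Gn 0 t‖ = 1 := by
      simp [Gn, mul_comm Complex.I, Complex.norm_exp_ofReal_mul_I]
    rw [this]
    exact Real.one_le_exp (by positivity)
  | succ n ih =>
    intro t ht
    have hB : ∀ x : ℝ, HasDerivAt (fun x : ℝ => Real.exp (x ^ 2 / 2)) (Real.exp (x ^ 2 / 2) * x) x := by
      intro x
      have := ((hasDerivAt_pow 2 x).div_const 2).exp
      convert this using 1
      simp
    refine image_norm_le_of_norm_deriv_right_le_deriv_boundary (a := 0) (b := t)
      (f := Gn (n + 1)) (f' := fun t => ((t : ℂ) / (2 * (n : ℂ) + 1) * Gn n t))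
      (fun x _ => (Gn_deriv n x).continuousAt.continuousWithinAt)
      (fun x _ => (Gn_deriv n x).hasDerivWithinAt) ?_ hB ?_ ⟨ht, le_rfl⟩
    · simp [Gn_zero]
    · intro x hx
      have h := ih x hx.1
      have e : ‖(2 * (n : ℂ) + 1)‖ = 2 * (n : ℝ) + 1 := by
        have : (2 * (n : ℂ) + 1) = ((2 * n + 1 : ℕ) : ℂ) := by push_cast; ring
        rw [this, Complex.norm_natCast]; push_cast; ring
      rw [norm_mul, norm_div, e, Complex.norm_real, Real.norm_of_nonneg hx.1, mul_comm]
      have : x / (2 * (n : ℝ) + 1) ≤ x := div_le_self hx.1 (by linarith [(Nat.cast_nonneg n : (0:ℝ) ≤ n)])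
      exact mul_le_mul h this (div_nonneg hx.1 (by positivity)) (Real.exp_pos _).le

lemma Gn_close (n : ℕ) (t : ℝ) (ht : 0 ≤ t) :
    (n : ℝ) * ‖Gn n t + Complex.I‖ ≤ Real.exp (t ^ 2 / 2) * t ^ 2 := by
  cases n with
  | zero => simp; positivity
  | succ n =>
    have e : ‖(2 * (n : ℂ) + 1)‖ = 2 * (n : ℝ) + 1 := by
      have : (2 * (n : ℂ) + 1) = ((2 * n + 1 : ℕ) : ℂ) := by push_cast; ring
      rw [this, Complex.norm_natCast]; push_cast; ring
    have := norm_image_sub_le_of_norm_deriv_le_segment' (a := 0) (b := t)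
      (f := Gn (n + 1)) (f' := fun t => ((t : ℂ) / (2 * (n : ℂ) + 1) * Gn n t))
      (C := t / (2 * (n : ℝ) + 1) * Real.exp (t ^ 2 / 2))
      (fun x _ => (Gn_deriv n x).hasDerivWithinAt) (by
        intro x hx
        rw [norm_mul, norm_div, e, Complex.norm_real, Real.norm_of_nonneg hx.1]
        have h1 := hx.1
        have h2 := hx.2.le
        have h3 : ‖Gn n x‖ ≤ Real.exp (t ^ 2 / 2) :=
          (Gn_bound n x hx.1).trans (Real.exp_le_exp.2 (by gcongr))
        gcongr) t ⟨ht, le_rfl⟩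
    rw [Gn_zero, sub_neg_eq_add, sub_zero] at this
    have hn : (0:ℝ) ≤ n := Nat.cast_nonneg n
    calc ((n + 1 : ℕ) : ℝ) * ‖Gn (n + 1) t + Complex.I‖
        ≤ (2 * (n : ℝ) + 1) * (t / (2 * (n : ℝ) + 1) * Real.exp (t ^ 2 / 2) * t) := by
          push_cast
          gcongr
          linarith
      _ = _ := by field_simp

lemma Gn_tendsto (t : ℝ) (ht : 0 ≤ t) : Tendsto (fun n => Gn n t) atTop (𝓝 (-Complex.I)) := by
  rw [tendsto_iff_norm_sub_tendsto_zero]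
  have h := tendsto_const_div_atTop_nhds_zero_nat (Real.exp (t ^ 2 / 2) * t ^ 2)
  refine squeeze_zero' (Eventually.of_forall fun n => norm_nonneg _) ?_ h
  filter_upwards [eventually_gt_atTop 0] with n hn
  rw [sub_neg_eq_add, le_div_iff₀ (by exact_mod_cast hn), mul_comm]
  exact Gn_close n t ht

/-- the small correction: `zn1 n t = -(n+1) + eps n t`. -/
noncomputable def eps (n : ℕ) (t : ℝ) : ℂ := (t : ℂ) ^ 2 / (2 * (n : ℂ) - 1) * Gn (n - 1) t / Gn n t

lemma zn1_eq (n : ℕ) (hn : 1 ≤ n) (t : ℝ) (ht : 0 < t) (hG : Gn n t ≠ 0) :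
    zn1 n t = -((n : ℂ) + 1) + eps n t := by
  obtain ⟨m, rfl⟩ : ∃ m, n = m + 1 := ⟨n - 1, by omega⟩
  have htc : (t : ℂ) ≠ 0 := by exact_mod_cast ht.ne'
  have hd : (dfac (m + 1) : ℂ) ≠ 0 := by exact_mod_cast (dfac_pos (m + 1)).ne'
  have h1 : (2 * (m : ℂ) + 1) ≠ 0 := by
    have : (2 * (m : ℝ) + 1) ≠ 0 := by positivity
    exact_mod_cast this
  have hid : HasDerivAt (fun t : ℝ => (t : ℂ)) 1 t := by
    simpa using (hasDerivAt_id t).ofReal_comp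
  have hder : HasDerivAt (h1sph (m + 1)) _ t :=
    ((((Gn_deriv m t).const_mul (dfac (m + 1) : ℂ)).div (hid.pow (m + 2))
      (pow_ne_zero _ htc))).congr_of_eventuallyEq (by
        filter_upwards [lt_mem_nhds ht] with s hs
        simpa using h1sph_eq (m + 1) s hs.ne')
  have e1 : (2 * ((m : ℂ) + 1) - 1) = 2 * (m : ℂ) + 1 := by ring
  rw [zn1, hder.deriv, h1sph_eq (m + 1) t ht.ne', eps]
  simp only [Pi.pow_apply, Nat.add_sub_cancel]
  push_cast
  rw [e1]
  field_simp
  ring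

lemma ratio_eq (n : ℕ) (κ R R' : ℝ) (hκ : 0 < κ) (hR : 0 < R) (hR' : 0 < R') :
    h1sph n (κ * R) / h1sph n (κ * R') =
      ((R' / R : ℝ) : ℂ) ^ (n + 1) * (Gn n (κ * R) / Gn n (κ * R')) := by
  rw [h1sph_eq n _ (by positivity), h1sph_eq n _ (by positivity)]
  have a1 : (κ : ℂ) ≠ 0 := by exact_mod_cast hκ.ne'
  have a2 : (R : ℂ) ≠ 0 := by exact_mod_cast hR.ne'
  have a3 : (R' : ℂ) ≠ 0 := by exact_mod_cast hR'.ne'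
  have hd : (dfac n : ℂ) ≠ 0 := by exact_mod_cast (dfac_pos n).ne'
  push_cast
  by_cases hG : Gn n (κ * R') = 0
  · simp [hG]
  · rw [mul_pow, mul_pow, div_pow]
    field_simp

lemma n_eps_tendsto (t : ℝ) (ht : 0 ≤ t) :
    Tendsto (fun n : ℕ => (n : ℂ) * eps n t) atTop (𝓝 ((t : ℂ) ^ 2 / 2)) := by
  have hI : -Complex.I ≠ 0 := neg_ne_zero.2 Complex.I_ne_zero
  have h1 : Tendsto (fun n : ℕ => Gn (n - 1) t) atTop (𝓝 (-Complex.I)) :=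
    (Gn_tendsto t ht).comp (tendsto_sub_atTop_nat 1)
  have h2 : Tendsto (fun n : ℕ => (n : ℂ)⁻¹) atTop (𝓝 0) := tendsto_inv_atTop_nhds_zero_nat
  have h3 := ((tendsto_const_nhds (x := (t : ℂ) ^ 2)).div
    ((tendsto_const_nhds (x := (2 : ℂ))).sub h2) (by norm_num)).mul
    (h1.div (Gn_tendsto t ht) hI)
  rw [sub_zero, div_self hI, mul_one] at h3
  refine h3.congr' ?_
  filter_upwards [eventually_gt_atTop 0] with n hn
  have hn' : (n : ℂ) ≠ 0 := by exact_mod_cast hn.ne'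
  have e : (2 - (n : ℂ)⁻¹) = (2 * (n : ℂ) - 1) / n := by field_simp
  simp only [Pi.div_apply, eps]
  rw [e, div_div_eq_mul_div]
  ring

lemma eps_tendsto (t : ℝ) (ht : 0 ≤ t) : Tendsto (fun n : ℕ => eps n t) atTop (𝓝 0) := by
  have h2 : Tendsto (fun n : ℕ => (n : ℂ)⁻¹) atTop (𝓝 0) := tendsto_inv_atTop_nhds_zero_nat
  have h := (n_eps_tendsto t ht).mul h2
  rw [mul_zero] at h
  refine h.congr' ?_
  filter_upwards [eventually_gt_atTop 0] with n hn
  have hn' : (n : ℂ) ≠ 0 := by exact_mod_cast hn.ne'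
  field_simp

lemma bdd_of_tendsto {f : ℕ → ℂ} {l : ℂ} (h : Tendsto f atTop (𝓝 l)) :
    ∃ K : ℝ, ∀ᶠ n in atTop, ‖f n‖ ≤ K :=
  ⟨‖l‖ + 1, (h.norm.eventually (gt_mem_nhds (lt_add_one _))).mono fun _ h => h.le⟩

lemma Gn_ne (t : ℝ) (ht : 0 ≤ t) : ∀ᶠ n in atTop, Gn n t ≠ 0 :=
  (Gn_tendsto t ht).eventually_ne (neg_ne_zero.2 Complex.I_ne_zero)

lemma Gn_ratio_close (a b : ℝ) (ha : 0 ≤ a) (hb : 0 ≤ b) :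
    ∃ K : ℝ, ∀ᶠ n : ℕ in atTop, (n : ℝ) * ‖Gn n a / Gn n b - 1‖ ≤ K := by
  have hI : -Complex.I ≠ 0 := neg_ne_zero.2 Complex.I_ne_zero
  obtain ⟨K, hK⟩ := bdd_of_tendsto ((Gn_tendsto b hb).inv₀ hI)
  refine ⟨(Real.exp (a ^ 2 / 2) * a ^ 2 + Real.exp (b ^ 2 / 2) * b ^ 2) * K, ?_⟩
  filter_upwards [hK, Gn_ne b hb] with n h1 h2
  have e : Gn n a / Gn n b - 1 = ((Gn n a + Complex.I) - (Gn n b + Complex.I)) * (Gn n b)⁻¹ := by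
    field_simp
    ring
  rw [e, norm_mul, ← mul_assoc]
  have h3 := Gn_close n a ha
  have h4 := Gn_close n b hb
  have h5 : (n : ℝ) * ‖(Gn n a + Complex.I) - (Gn n b + Complex.I)‖ ≤
      Real.exp (a ^ 2 / 2) * a ^ 2 + Real.exp (b ^ 2 / 2) * b ^ 2 := by
    calc _ ≤ (n : ℝ) * (‖Gn n a + Complex.I‖ + ‖Gn n b + Complex.I‖) := by
          gcongr; exact norm_sub_le _ _
      _ ≤ _ := by linarith
  exact mul_le_mul h5 h1 (norm_nonneg _) (by positivity)

lemma Lambda_inv (R' κp κs : ℝ) (hR' : 0 < R') (hκp : 0 < κp) (hκs : 0 < κs) :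
    ∃ K : ℝ, ∀ᶠ n : ℕ in atTop, ‖(LambdaN R' κp κs n)⁻¹‖ ≤ K := by
  have hp : 0 < κp * R' := by positivity
  have hs : 0 < κs * R' := by positivity
  have h := (((n_eps_tendsto _ hp.le).neg).sub ((n_eps_tendsto _ hs.le).add
    (eps_tendsto _ hs.le))).add ((eps_tendsto _ hp.le).mul (eps_tendsto _ hs.le))
  have hne : -(((κp * R' : ℝ) : ℂ) ^ 2 / 2) - (((κs * R' : ℝ) : ℂ) ^ 2 / 2 + 0) + 0 * 0 ≠ 0 := by
    have : (-((κp * R') ^ 2 / 2) - ((κs * R') ^ 2 / 2 + 0) + 0 * 0 : ℝ) ≠ 0 := by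
      have : 0 < (κp * R') ^ 2 := by positivity
      have : 0 < (κs * R') ^ 2 := by positivity
      apply ne_of_lt
      linarith
    exact_mod_cast this
  have hlim : Tendsto (fun n => LambdaN R' κp κs n) atTop
      (𝓝 (-(((κp * R' : ℝ) : ℂ) ^ 2 / 2) - (((κs * R' : ℝ) : ℂ) ^ 2 / 2 + 0) + 0 * 0)) := by
    refine h.congr' ?_
    filter_upwards [eventually_ge_atTop 1, Gn_ne _ hp.le, Gn_ne _ hs.le] with n hn h1 h2
    rw [LambdaN, zn1_eq n hn _ hp h1, zn1_eq n hn _ hs h2]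
    ring
  exact bdd_of_tendsto (hlim.inv₀ hne)

/-- `n(n+1)(v-u) + ...` with small corrections. -/
lemma bound_diag (n : ℕ) (hn : 1 ≤ n) (K : ℝ) (hK : 1 ≤ K) (u v e f : ℂ)
    (hv : ‖v‖ ≤ K) (hD : (n : ℝ) * ‖v - u‖ ≤ K)
    (he : (n : ℝ) * ‖e‖ ≤ K) (hf : (n : ℝ) * ‖f‖ ≤ K) :
    ‖-((n : ℂ) * ((n : ℂ) + 1)) * u + (-((n : ℂ) + 1) + e) * (1 + (-((n : ℂ) + 1) + f)) * v‖
      ≤ 6 * K ^ 3 * n := by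
  have hn' : (1 : ℝ) ≤ n := by exact_mod_cast hn
  have h1 : -((n : ℂ) * ((n : ℂ) + 1)) * u + (-((n : ℂ) + 1) + e) * (1 + (-((n : ℂ) + 1) + f)) * v
      = ((n : ℂ) + 1) * ((n : ℂ) * (v - u)) + (-((n : ℂ) * e) - ((n : ℂ) * f) - f + e * f) * v := by
    ring
  have nn : ‖((n : ℂ) + 1)‖ ≤ 2 * n := by
    refine (norm_add_le _ _).trans ?_
    rw [Complex.norm_natCast, norm_one]; linarith
  have he' : ‖e‖ ≤ K := by nlinarith [norm_nonneg e]
  have hf' : ‖f‖ ≤ K := by nlinarith [norm_nonneg f]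
  have A : ‖((n : ℂ) + 1) * ((n : ℂ) * (v - u))‖ ≤ 2 * n * K := by
    rw [norm_mul, norm_mul, Complex.norm_natCast]
    exact mul_le_mul nn hD (by positivity) (by positivity)
  have B : ‖(-((n : ℂ) * e) - ((n : ℂ) * f) - f + e * f)‖ ≤ K + K + K + K * K := by
    refine (norm_add_le _ _).trans (add_le_add ((norm_sub_le _ _).trans
      (add_le_add ((norm_sub_le _ _).trans (add_le_add ?_ ?_)) hf')) ?_)
    · rwa [norm_neg, norm_mul, Complex.norm_natCast]
    · rwa [norm_mul, Complex.norm_natCast]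
    · rw [norm_mul]; exact mul_le_mul he' hf' (norm_nonneg _) (by positivity)
  rw [h1]
  have B' : ‖(-((n : ℂ) * e) - ((n : ℂ) * f) - f + e * f) * v‖ ≤ (K + K + K + K * K) * K := by
    rw [norm_mul]; exact mul_le_mul B hv (norm_nonneg _) (by positivity)
  refine (norm_add_le _ _).trans ((add_le_add A B').trans ?_)
  have k2 : K ≤ K ^ 2 := by nlinarith
  have k3 : K ^ 2 ≤ K ^ 3 := by nlinarith [sq_nonneg K]
  have k4 : K ^ 3 ≤ K ^ 3 * n := le_mul_of_one_le_right (by positivity) hn'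
  have k5 : K * n ≤ K ^ 3 * n := by gcongr; linarith
  nlinarith

lemma bound_off (n : ℕ) (hn : 1 ≤ n) (K : ℝ) (hK : 1 ≤ K) (m u v e f : ℂ) (hm : ‖m‖ ≤ 2 * n)
    (hu : ‖u‖ ≤ K) (hv : ‖v‖ ≤ K) (hD : (n : ℝ) * ‖v - u‖ ≤ K)
    (he : (n : ℝ) * ‖e‖ ≤ K) (hf : (n : ℝ) * ‖f‖ ≤ K) :
    ‖(-m + e) * u - (-m + f) * v‖ ≤ 4 * K ^ 2 := by
  have hn' : (1 : ℝ) ≤ n := by exact_mod_cast hn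
  have he' : ‖e‖ ≤ K := by nlinarith [norm_nonneg e]
  have hf' : ‖f‖ ≤ K := by nlinarith [norm_nonneg f]
  have h1 : (-m + e) * u - (-m + f) * v = m * (v - u) + e * u - f * v := by ring
  rw [h1]
  have A : ‖m * (v - u)‖ ≤ 2 * K := by
    rw [norm_mul]
    nlinarith [norm_nonneg (v - u)]
  have B : ‖e * u‖ ≤ K * K := by
    rw [norm_mul]; exact mul_le_mul he' hu (norm_nonneg _) (by positivity)
  have C : ‖f * v‖ ≤ K * K := by
    rw [norm_mul]; exact mul_le_mul hf' hv (norm_nonneg _) (by positivity)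
  have := norm_sub_le (m * (v - u) + e * u) (f * v)
  have := norm_add_le (m * (v - u)) (e * u)
  nlinarith

/-- Assembly of one entry. -/
lemma assemble (n : ℕ) (K R R' : ℝ) (hK : 1 ≤ K) (hR' : 0 < R') (hRR : R' < R) (L B : ℂ)
    (hL : ‖L⁻¹‖ ≤ K) (hB : ‖B‖ ≤ 8 * K ^ 3 * n) :
    ‖((R' : ℂ) / ((R : ℂ) * L)) * (((R' / R : ℝ) : ℂ) ^ (n + 1) * B)‖
      ≤ 8 * K ^ 4 * n * (R' / R) ^ n := by
  have hR : 0 < R := hR'.trans hRR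
  have hq0 : 0 ≤ R' / R := by positivity
  have hq1 : R' / R ≤ 1 := (div_le_one hR).2 hRR.le
  have e : ((R' : ℂ) / ((R : ℂ) * L)) = ((R' / R : ℝ) : ℂ) * L⁻¹ := by
    push_cast
    rw [div_mul_eq_div_div, div_eq_mul_inv _ L]
  rw [e, norm_mul, norm_mul, norm_mul, norm_pow, Complex.norm_real, Real.norm_of_nonneg hq0]
  have h1 : R' / R * ‖L⁻¹‖ ≤ 1 * K := mul_le_mul hq1 hL (norm_nonneg _) zero_le_one
  have h2 : (R' / R) ^ (n + 1) ≤ (R' / R) ^ n := pow_le_pow_of_le_one hq0 hq1 (Nat.le_succ n)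
  calc _ ≤ (1 * K) * ((R' / R) ^ n * (8 * K ^ 3 * n)) := by gcongr
    _ = _ := by ring

lemma sqrt_bound (n : ℕ) (hn : 1 ≤ n) : ‖((Real.sqrt (n * (n + 1)) : ℝ) : ℂ)‖ ≤ 2 * n := by
  have hn' : (1 : ℝ) ≤ n := by exact_mod_cast hn
  rw [Complex.norm_real, Real.norm_of_nonneg (Real.sqrt_nonneg _)]
  refine Real.sqrt_le_iff.2 ⟨by positivity, by nlinarith⟩

set_option maxHeartbeats 1000000 in
/-- All the nonzero entries of the matrix `Q_n` satisfy `|Q_{n,ij}| ≤ C n (R'/R)^n`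
for sufficiently large `n`. -/
theorem Qn_entries_bound (R R' κp κs : ℝ)
    (hR' : 0 < R') (hRR : R' < R) (hκp : 0 < κp) (hκ : κp < κs) :
    ∃ C : ℝ, 0 < C ∧ ∃ N : ℕ, ∀ n : ℕ, N ≤ n →
      ‖Qn11 R' R κp κs n‖ ≤ C * n * (R' / R) ^ n ∧
      ‖Qn13 R' R κp κs n‖ ≤ C * n * (R' / R) ^ n ∧
      ‖Qn31 R' R κp κs n‖ ≤ C * n * (R' / R) ^ n ∧
      ‖Qn33 R' R κp κs n‖ ≤ C * n * (R' / R) ^ n ∧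
      ‖Qn22 R' R κs n‖ ≤ C * n * (R' / R) ^ n := by
  have hR : 0 < R := hR'.trans hRR
  have hκs : 0 < κs := hκp.trans hκ
  have pR : 0 < κp * R := by positivity
  have pR' : 0 < κp * R' := by positivity
  have sR : 0 < κs * R := by positivity
  have sR' : 0 < κs * R' := by positivity
  obtain ⟨K1, h1⟩ := bdd_of_tendsto (n_eps_tendsto _ pR.le)
  obtain ⟨K2, h2⟩ := bdd_of_tendsto (n_eps_tendsto _ pR'.le)
  obtain ⟨K3, h3⟩ := bdd_of_tendsto (n_eps_tendsto _ sR.le)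
  obtain ⟨K4, h4⟩ := bdd_of_tendsto (n_eps_tendsto _ sR'.le)
  obtain ⟨K5, h5⟩ := Gn_ratio_close _ _ pR.le pR'.le
  obtain ⟨K6, h6⟩ := Gn_ratio_close _ _ sR.le sR'.le
  obtain ⟨K7, h7⟩ := Lambda_inv R' κp κs hR' hκp hκs
  set K : ℝ := 1 + |K1| + |K2| + |K3| + |K4| + |K5| + |K6| + |K7| with hKdef
  have a1 := abs_nonneg K1
  have a2 := abs_nonneg K2
  have a3 := abs_nonneg K3
  have a4 := abs_nonneg K4
  have a5 := abs_nonneg K5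
  have a6 := abs_nonneg K6
  have a7 := abs_nonneg K7
  have b1 := le_abs_self K1
  have b2 := le_abs_self K2
  have b3 := le_abs_self K3
  have b4 := le_abs_self K4
  have b5 := le_abs_self K5
  have b6 := le_abs_self K6
  have b7 := le_abs_self K7
  have hK : 1 ≤ K := by linarith
  refine ⟨8 * K ^ 4, by positivity, ?_⟩
  rw [← eventually_atTop (p := fun n : ℕ => _)]
  filter_upwards [h1, h2, h3, h4, h5, h6, h7, Gn_ne _ pR.le, Gn_ne _ pR'.le, Gn_ne _ sR.le,
    Gn_ne _ sR'.le, eventually_ge_atTop 1] with n h1 h2 h3 h4 h5 h6 h7 g1 g2 g3 g4 hn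
  have hn' : (1 : ℝ) ≤ n := by exact_mod_cast hn
  rw [norm_mul, Complex.norm_natCast] at h1 h2 h3 h4
  have zp := ratio_eq n κp R R' hκp hR hR'
  have zs := ratio_eq n κs R R' hκs hR hR'
  rw [← znp] at zp
  rw [← zns] at zs
  set u := Gn n (κp * R) / Gn n (κp * R')
  set v := Gn n (κs * R) / Gn n (κs * R')
  have c1 : (n : ℝ) * ‖eps n (κp * R)‖ ≤ K := by linarith
  have c2 : (n : ℝ) * ‖eps n (κp * R')‖ ≤ K := by linarith
  have c3 : (n : ℝ) * ‖eps n (κs * R)‖ ≤ K := by linarith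
  have c4 : (n : ℝ) * ‖eps n (κs * R')‖ ≤ K := by linarith
  have c7 : ‖(LambdaN R' κp κs n)⁻¹‖ ≤ K := by linarith
  have hu : ‖u‖ ≤ K := by
    have : ‖u‖ ≤ ‖u - 1‖ + 1 := by simpa using norm_add_le (u - 1) 1
    nlinarith [norm_nonneg (u - 1)]
  have hv : ‖v‖ ≤ K := by
    have : ‖v‖ ≤ ‖v - 1‖ + 1 := by simpa using norm_add_le (v - 1) 1
    nlinarith [norm_nonneg (v - 1)]
  have hD : (n : ℝ) * ‖v - u‖ ≤ K := by
    have : ‖v - u‖ ≤ ‖v - 1‖ + ‖u - 1‖ := by simpa using norm_sub_le (v - 1) (u - 1)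
    nlinarith
  have hD' : (n : ℝ) * ‖u - v‖ ≤ K := by rwa [norm_sub_rev]
  have kk : 1 ≤ K ^ 3 := one_le_pow₀ hK
  have k3 : K ^ 2 ≤ K ^ 3 := pow_le_pow_right₀ hK (by norm_num)
  have hs := sqrt_bound n hn
  have offd : ∀ x : ℂ, ‖x‖ ≤ 4 * K ^ 2 →
      ‖((Real.sqrt (n * (n + 1)) : ℝ) : ℂ) * x‖ ≤ 8 * K ^ 3 * n := by
    intro x hx
    rw [norm_mul]
    calc _ ≤ (2 * (n : ℝ)) * (4 * K ^ 3) := by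
          gcongr
          linarith
      _ = _ := by ring
  have diag : ∀ x : ℂ, ‖x‖ ≤ 6 * K ^ 3 * n → ‖x‖ ≤ 8 * K ^ 3 * n := by
    intro x hx
    refine hx.trans ?_
    gcongr
    norm_num
  have mn : ‖(n : ℂ)‖ ≤ 2 * n := by rw [Complex.norm_natCast]; linarith
  have mn1 : ‖((n : ℂ) + 1)‖ ≤ 2 * n := by
    refine (norm_add_le _ _).trans ?_
    rw [Complex.norm_natCast, norm_one]; linarith
  refine ⟨?_, ?_, ?_, ?_, ?_⟩
  · convert assemble n K R R' hK hR' hRR (LambdaN R' κp κs n) _ c7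
      (diag _ (bound_diag n hn K hK u v _ _ hv hD c2 c3)) using 2
    rw [Qn11, zp, zs, zn1_eq n hn _ pR' g2, zn1_eq n hn _ sR g3]
    ring
  · convert assemble n K R R' hK hR' hRR (LambdaN R' κp κs n) _ c7
      (offd _ (bound_off n hn K hK n u v _ _ mn hu hv hD c4 c3)) using 2
    rw [Qn13, zp, zs, zn1_eq n hn _ sR' g4, zn1_eq n hn _ sR g3]
    ring
  · convert assemble n K R R' hK hR' hRR (LambdaN R' κp κs n) _ c7
      (offd _ (bound_off n hn K hK (n + 1) v u _ _ mn1 hv hu hD' c2 c1)) using 2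
    rw [Qn31, zp, zs, zn1_eq n hn _ pR' g2, zn1_eq n hn _ pR g1]
    ring
  · convert assemble n K R R' hK hR' hRR (LambdaN R' κp κs n) _ c7
      (diag _ (bound_diag n hn K hK v u _ _ hu hD' c1 c4)) using 2
    rw [Qn33, zp, zs, zn1_eq n hn _ sR' g4, zn1_eq n hn _ pR g1]
    ring
  · have hq0 : 0 ≤ R' / R := by positivity
    have hq1 : R' / R ≤ 1 := (div_le_one hR).2 hRR.le
    have h2 : (R' / R) ^ (n + 1) ≤ (R' / R) ^ n := pow_le_pow_of_le_one hq0 hq1 (Nat.le_succ n)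
    have k4 : K ≤ K ^ 4 := le_self_pow₀ hK (by norm_num)
    rw [Qn22, zs, norm_mul, norm_pow, Complex.norm_real, Real.norm_of_nonneg hq0]
    have : ‖v‖ ≤ 8 * K ^ 4 * n := by
      have k5 : K ^ 4 ≤ K ^ 4 * n := le_mul_of_one_le_right (by positivity) hn'
      have k6 : 0 ≤ K ^ 4 := by positivity
      linarith
    calc _ ≤ (R' / R) ^ n * (8 * K ^ 4 * n) := by gcongr
      _ = _ := by ring
end

section
/- For every n ∈ ℕ and all t_p, t_s > 0, defining z_n^{(1)}(t) = t·(h^{(1)}_n)'(t)/h^{(1)}_n(t), the imaginary part of Λ_n = z_n^{(1)}(t_p)·(1 + z_n^{(1)}(t_s)) − n(n+1) satisfies Im Λ_n = Re z_n^{(1)}(t_p)·Im z_n^{(1)}(t_s) + (1 + Re z_n^{(1)}(t_s))·Im z_n^{(1)}(t_p) < 0. -/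
theorem sph_deriv_aux (f : ℕ → ℝ → ℝ)
    (hrec : ∀ n z, f (n + 2) z = ((2 * (n : ℝ) + 3) / z) * f (n + 1) z - f n z)
    (h0 : ∀ t, 0 < t → HasDerivAt (f 0) (- f 1 t) t)
    (h1 : ∀ t, 0 < t → HasDerivAt (f 1) (f 0 t - 2 / t * f 1 t) t) (n : ℕ) :
    ∀ t, 0 < t → HasDerivAt (f n) (n / t * f n t - f (n + 1) t) t ∧
      HasDerivAt (f (n + 1)) (f n t - (n + 2) / t * f (n + 1) t) t := by
  induction n with
  | zero =>
    intro t ht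
    refine ⟨(h0 t ht).congr_deriv (by simp), (h1 t ht).congr_deriv (by simp)⟩
  | succ n ih =>
    intro t ht
    obtain ⟨ha, hb⟩ := ih t ht
    have hne : t ≠ 0 := ht.ne'
    refine ⟨hb.congr_deriv ?_, ?_⟩
    · rw [hrec]; push_cast; field_simp; ring
    · have hfun : f (n + 1 + 1) = fun z => ((2 * (n : ℝ) + 3) / z) * f (n + 1) z - f n z := by
        funext z; exact hrec n z
      rw [hfun]
      have := (((hasDerivAt_const t (2 * (n : ℝ) + 3)).div (hasDerivAt_id t) hne).mul hb).sub ha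
      refine this.congr_deriv ?_
      simp only [id, Pi.div_apply]
      push_cast; field_simp; ring

theorem jsph_deriv (n : ℕ) (t : ℝ) (ht : 0 < t) :
    HasDerivAt (jsph n) (n / t * jsph n t - jsph (n + 1) t) t ∧
      HasDerivAt (jsph (n + 1)) (jsph n t - (n + 2) / t * jsph (n + 1) t) t := by
  refine sph_deriv_aux jsph (fun n z => by rw [jsph]) ?_ ?_ n t ht
  · intro t ht
    have hf : jsph 0 = fun z => Real.sin z / z := by funext z; rw [jsph]
    have hne : t ≠ 0 := ht.ne'
    rw [hf]
    refine ((Real.hasDerivAt_sin t).div (hasDerivAt_id t) hne).congr_deriv ?_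
    simp only [jsph, id]; field_simp; ring
  · intro t ht
    have hf : jsph 1 = fun z => Real.sin z / z ^ 2 - Real.cos z / z := by funext z; rw [jsph]
    have hne : t ≠ 0 := ht.ne'
    rw [hf]
    refine (((Real.hasDerivAt_sin t).div (hasDerivAt_pow 2 t) (pow_ne_zero 2 hne)).sub
      ((Real.hasDerivAt_cos t).div (hasDerivAt_id t) hne)).congr_deriv ?_
    simp only [jsph, id]; push_cast; field_simp; ring

theorem ysph_deriv (n : ℕ) (t : ℝ) (ht : 0 < t) :
    HasDerivAt (ysph n) (n / t * ysph n t - ysph (n + 1) t) t ∧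
      HasDerivAt (ysph (n + 1)) (ysph n t - (n + 2) / t * ysph (n + 1) t) t := by
  refine sph_deriv_aux ysph (fun n z => by rw [ysph]) ?_ ?_ n t ht
  · intro t ht
    have hf : ysph 0 = fun z => -Real.cos z / z := by funext z; rw [ysph]
    have hne : t ≠ 0 := ht.ne'
    rw [hf]
    refine ((Real.hasDerivAt_cos t).neg.div (hasDerivAt_id t) hne).congr_deriv ?_
    simp only [ysph, id, Pi.neg_apply]; field_simp; ring
  · intro t ht
    have hf : ysph 1 = fun z => -Real.cos z / z ^ 2 - Real.sin z / z := by funext z; rw [ysph]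
    have hne : t ≠ 0 := ht.ne'
    rw [hf]
    refine (((Real.hasDerivAt_cos t).neg.div (hasDerivAt_pow 2 t) (pow_ne_zero 2 hne)).sub
      ((Real.hasDerivAt_sin t).div (hasDerivAt_id t) hne)).congr_deriv ?_
    simp only [ysph, id, Pi.neg_apply]; push_cast; field_simp; ring

theorem sph_wronskian (n : ℕ) (t : ℝ) (ht : 0 < t) :
    ysph n t * jsph (n + 1) t - jsph n t * ysph (n + 1) t = 1 / t ^ 2 := by
  induction n with
  | zero =>
    simp only [ysph, jsph, zero_add]
    have := Real.sin_sq_add_cos_sq t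
    field_simp
    linear_combination t * this
  | succ n ih =>
    rw [← ih, show ysph (n + 1 + 1) t = _ from by rw [ysph],
      show jsph (n + 1 + 1) t = _ from by rw [jsph]]
    ring

/-- squared modulus of the Riccati-Hankel function -/
noncomputable def Msph (n : ℕ) (t : ℝ) : ℝ := t ^ 2 * (jsph n t ^ 2 + ysph n t ^ 2)

noncomputable def Csph (n : ℕ) (t : ℝ) : ℝ :=
  t ^ 2 * (jsph n t * jsph (n + 1) t + ysph n t * ysph (n + 1) t)

theorem Msph_deriv (n : ℕ) (t : ℝ) (ht : 0 < t) :
    HasDerivAt (Msph n) (2 * (n + 1) / t * Msph n t - 2 * Csph n t) t := by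
  have hj := (jsph_deriv n t ht).1
  have hy := (ysph_deriv n t ht).1
  have hne : t ≠ 0 := ht.ne'
  refine ((hasDerivAt_pow 2 t).mul ((hj.pow 2).add (hy.pow 2))).congr_deriv ?_
  simp only [Msph, Csph, Pi.add_apply, Pi.pow_apply]
  push_cast; field_simp; ring

theorem Csph_deriv (n : ℕ) (t : ℝ) (ht : 0 < t) :
    HasDerivAt (Csph n) (Msph n t - Msph (n + 1) t) t := by
  obtain ⟨hj, hj1⟩ := jsph_deriv n t ht
  obtain ⟨hy, hy1⟩ := ysph_deriv n t ht
  have hne : t ≠ 0 := ht.ne'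
  refine ((hasDerivAt_pow 2 t).mul ((hj.mul hj1).add (hy.mul hy1))).congr_deriv ?_
  simp only [Msph, Pi.add_apply, Pi.mul_apply]
  push_cast; field_simp; ring

open Polynomial in
theorem aeval_nat_nonneg (P : ℕ[X]) (s : ℝ) (hs : 0 ≤ s) : 0 ≤ aeval s P := by
  rw [aeval_eq_sum_range]
  exact Finset.sum_nonneg fun i _ => by rw [nsmul_eq_mul]; positivity

open Polynomial in
theorem aeval_inv_sq_deriv (P : ℕ[X]) (t : ℝ) (ht : 0 < t) :
    HasDerivAt (fun t : ℝ => aeval (1 / t ^ 2) P)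
      (aeval (1 / t ^ 2) (derivative P) * (-2 / t ^ 3)) t := by
  have hne : t ≠ 0 := ht.ne'
  have h1 : HasDerivAt (fun t : ℝ => 1 / t ^ 2) (-2 / t ^ 3) t := by
    refine ((hasDerivAt_const t (1 : ℝ)).div (hasDerivAt_pow 2 t)
      (pow_ne_zero 2 hne)).congr_deriv ?_
    push_cast; field_simp; ring
  exact (Polynomial.hasDerivAt_aeval P (1 / t ^ 2)).comp t h1

open Polynomial in
theorem Msph_poly (n : ℕ) : ∃ P : ℕ[X], ∀ t, 0 < t → Msph n t = aeval (1 / t ^ 2) P := by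
  induction n with
  | zero =>
    refine ⟨1, fun t ht => ?_⟩
    simp only [Msph, jsph, ysph, map_one]
    have := Real.sin_sq_add_cos_sq t
    field_simp
    linear_combination this
  | succ n ih =>
    obtain ⟨P, hP⟩ := ih
    have hC : ∀ t, 0 < t → Csph n t =
        (n + 1) / t * aeval (1 / t ^ 2) P + aeval (1 / t ^ 2) (derivative P) * (1 / t ^ 3) := by
      intro t ht
      have hne : t ≠ 0 := ht.ne'
      have h1 := Msph_deriv n t ht
      have h2 := (aeval_inv_sq_deriv P t ht).congr_of_eventuallyEq
        (f₁ := Msph n) ((lt_mem_nhds ht).mono hP)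
      have h3 := h1.unique h2
      rw [hP t ht] at h3
      linear_combination (-1 / 2) * h3
    refine ⟨P + (C (n + 1)) * X * P + C (2 * n + 5) * X ^ 2 * derivative P
      + C 2 * X ^ 3 * derivative (derivative P), fun t ht => ?_⟩
    have hne : t ≠ 0 := ht.ne'
    have h1 := Csph_deriv n t ht
    have h2 := ((((hasDerivAt_const t ((n : ℝ) + 1)).div (hasDerivAt_id t) hne).mul
      (aeval_inv_sq_deriv P t ht)).add ((aeval_inv_sq_deriv (derivative P) t ht).mul
      ((hasDerivAt_const t (1 : ℝ)).div (hasDerivAt_pow 3 t)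
      (pow_ne_zero 3 hne)))).congr_of_eventuallyEq (f₁ := Csph n) ((lt_mem_nhds ht).mono hC)
    have h3 := h1.unique h2
    rw [hP t ht] at h3
    simp only [id, Pi.div_apply] at h3
    simp only [map_add, map_mul, map_pow, aeval_X, aeval_C]
    simp only [eq_natCast, map_natCast]
    push_cast at h3 ⊢
    generalize aeval (1 / t ^ 2) P = p at *
    generalize aeval (1 / t ^ 2) (derivative P) = q at *
    generalize aeval (1 / t ^ 2) (derivative (derivative P)) = r at *
    have h4 : Msph (n + 1) t = p - (p - Msph (n + 1) t) := by ring
    rw [h4, h3]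
    field_simp
    ring

theorem zn1_facts (n : ℕ) (t : ℝ) (ht : 0 < t) : (zn1 n t).re ≤ -1 ∧ 0 < (zn1 n t).im := by
  have hj := (jsph_deriv n t ht).1
  have hy := (ysph_deriv n t ht).1
  have hW := sph_wronskian n t ht
  have hne : t ≠ 0 := ht.ne'
  obtain ⟨P, hP⟩ := Msph_poly n
  have h1 := Msph_deriv n t ht
  have h2 := (aeval_inv_sq_deriv P t ht).congr_of_eventuallyEq
    (f₁ := Msph n) ((lt_mem_nhds ht).mono hP)
  have h3 := h1.unique h2
  have h4 := aeval_nat_nonneg (Polynomial.derivative P) (1 / t ^ 2) (by positivity)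
  have h5 : 2 * (n + 1) / t * Msph n t - 2 * Csph n t ≤ 0 := by
    rw [h3]
    apply mul_nonpos_of_nonneg_of_nonpos h4
    rw [neg_div]
    have : 0 < 2 / t ^ 3 := by positivity
    linarith
  have hd : HasDerivAt (h1sph n) (((n / t * jsph n t - jsph (n + 1) t : ℝ) : ℂ)
      + Complex.I * ((n / t * ysph n t - ysph (n + 1) t : ℝ) : ℂ)) t :=
    hj.ofReal_comp.add (hy.ofReal_comp.const_mul Complex.I)
  unfold Msph Csph at h5
  rw [zn1, hd.deriv]
  unfold h1sph
  generalize jsph n t = a at *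
  generalize jsph (n + 1) t = b at *
  generalize ysph n t = c at *
  generalize ysph (n + 1) t = d at *
  have hpos : 0 < a ^ 2 + c ^ 2 := by
    by_contra hcon
    have ha : a = 0 := by nlinarith [sq_nonneg a, sq_nonneg c]
    have hc : c = 0 := by nlinarith [sq_nonneg a, sq_nonneg c]
    have : 0 < 1 / t ^ 2 := by positivity
    rw [ha, hc] at hW
    linarith
  have hns : Complex.normSq ((a : ℂ) + Complex.I * (c : ℂ)) = a ^ 2 + c ^ 2 := by
    simp [Complex.normSq_apply]; ring
  constructor
  · have key : ((t : ℂ) * (((n / t * a - b : ℝ) : ℂ) + Complex.I * ((n / t * c - d : ℝ) : ℂ)) /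
      ((a : ℂ) + Complex.I * (c : ℂ))).re =
        t * ((n / t * a - b) * a + (n / t * c - d) * c) / (a ^ 2 + c ^ 2) := by
      rw [Complex.div_re, hns]
      simp [-Complex.ofReal_sub, -Complex.ofReal_mul, -Complex.ofReal_div]
      ring
    rw [key, div_le_iff₀ hpos]
    have h6 : 2 * (n + 1) / t * (t ^ 2 * (a ^ 2 + c ^ 2)) - 2 * (t ^ 2 * (a * b + c * d)) =
        2 * t * (t * ((n / t * a - b) * a + (n / t * c - d) * c) + (a ^ 2 + c ^ 2)) := by
      field_simp; ring
    rw [h6] at h5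
    have := nonpos_of_mul_nonpos_right h5 (by positivity)
    linarith
  · have key : ((t : ℂ) * (((n / t * a - b : ℝ) : ℂ) + Complex.I * ((n / t * c - d : ℝ) : ℂ)) /
      ((a : ℂ) + Complex.I * (c : ℂ))).im = t * (c * b - a * d) / (a ^ 2 + c ^ 2) := by
      rw [Complex.div_im, hns]
      simp [-Complex.ofReal_sub, -Complex.ofReal_mul, -Complex.ofReal_div]
      ring
    rw [key, hW]
    positivity

/-- The imaginary part of `Λ_n = z_n^{(1)}(t_p)(1 + z_n^{(1)}(t_s)) - n(n+1)` equals
`Re z_n^{(1)}(t_p) Im z_n^{(1)}(t_s) + (1 + Re z_n^{(1)}(t_s)) Im z_n^{(1)}(t_p)`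
and is negative. -/
theorem im_Lambda_n_neg (n : ℕ) (tp ts : ℝ) (htp : 0 < tp) (hts : 0 < ts) :
    (zn1 n tp * (1 + zn1 n ts) - (n : ℂ) * ((n : ℂ) + 1)).im =
      (zn1 n tp).re * (zn1 n ts).im + (1 + (zn1 n ts).re) * (zn1 n tp).im ∧
    (zn1 n tp * (1 + zn1 n ts) - (n : ℂ) * ((n : ℂ) + 1)).im < 0 := by
  have heq : (zn1 n tp * (1 + zn1 n ts) - (n : ℂ) * ((n : ℂ) + 1)).im =
      (zn1 n tp).re * (zn1 n ts).im + (1 + (zn1 n ts).re) * (zn1 n tp).im := by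
    simp
    ring
  refine ⟨heq, ?_⟩
  rw [heq]
  obtain ⟨h1, h2⟩ := zn1_facts n tp htp
  obtain ⟨h3, h4⟩ := zn1_facts n ts hts
  nlinarith
end
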